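/- For all ε > 0 and Δ > 0, V* = inf_{μ ∈ ⋃_{i≥1} 𝒫_{i,sym}} V(μ); that is, the infimum of the expected ℓ¹ cost over all probability measures satisfying the ε-differential-privacy constraint is attained in the limit over measures whose densities are constant on each ℓ¹ layer A_i(k). (Lemma 3.) -/

import Mathlib

open MeasureTheory Real Filter
open scoped ENNReal Topology

noncomputable section

/-- The ℓ¹ norm on ℝ². -/
def l1 (x : ℝ × ℝ) : ℝ := |x.1| + |x.2|

/-- The ε-differential-privacy constraint on a measure on ℝ² with sensitivity Δ. -/
def DPC (ε Δ : ℝ) (μ : Measure (ℝ × ℝ)) : Prop :=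
  ∀ S : Set (ℝ × ℝ), MeasurableSet S → ∀ t : ℝ × ℝ, l1 t ≤ Δ →
    μ S ≤ ENNReal.ofReal (Real.exp ε) * μ ((· + t) '' S)

/-- Expected ℓ¹ cost of a noise distribution. -/
def cost (μ : Measure (ℝ × ℝ)) : ℝ≥0∞ := ∫⁻ x, ENNReal.ofReal (l1 x) ∂μ

/-- The index k of the ℓ¹ layer A_i(k) = {x : kΔ/i ≤ ‖x‖₁ < (k+1)Δ/i} containing x. -/
def layerIdx (Δ : ℝ) (i : ℕ) (x : ℝ × ℝ) : ℕ := ⌊l1 x * i / Δ⌋₊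

/-- μ has a density w.r.t. Lebesgue measure which is constant on each ℓ¹ layer
A_i(k), with constant value a_k on A_i(k); (a_k) is the density sequence of μ. -/
def HasDensitySeq (Δ : ℝ) (i : ℕ) (μ : Measure (ℝ × ℝ)) (a : ℕ → ℝ≥0∞) : Prop :=
  μ = MeasureTheory.volume.withDensity (fun x => a (layerIdx Δ i x))

/-- Membership in 𝒫: probability measures satisfying the ε-DP constraint. -/
def MemP (ε Δ : ℝ) (μ : Measure (ℝ × ℝ)) : Prop :=
  IsProbabilityMeasure μ ∧ DPC ε Δ μ

/-- Membership in 𝒫_{i,sym}: members of 𝒫 with layer-constant density. -/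
def MemPsym (ε Δ : ℝ) (i : ℕ) (μ : Measure (ℝ × ℝ)) : Prop :=
  MemP ε Δ μ ∧ ∃ a : ℕ → ℝ≥0∞, HasDensitySeq Δ i μ a

/-- Membership in 𝒫_i^{(a)}: layer-constant density with nonincreasing density sequence. -/
def MemPa (ε Δ : ℝ) (i : ℕ) (μ : Measure (ℝ × ℝ)) : Prop :=
  MemP ε Δ μ ∧ ∃ a : ℕ → ℝ≥0∞, HasDensitySeq Δ i μ a ∧ Antitone a

/-- Membership in 𝒫_i^{(b)}: additionally the density sequence decays geometrically,
a_k = e^ε · a_{k+i} for all k. -/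
def MemPb (ε Δ : ℝ) (i : ℕ) (μ : Measure (ℝ × ℝ)) : Prop :=
  MemP ε Δ μ ∧ ∃ a : ℕ → ℝ≥0∞, HasDensitySeq Δ i μ a ∧ Antitone a ∧
    ∀ k : ℕ, a k = ENNReal.ofReal (Real.exp ε) * a (k + i)

/-- Membership in 𝒫_i^{(c)}: additionally a₀ = e^ε · a_{i−1} and
a₀ = a₁ = ⋯ = a_k for some 0 ≤ k ≤ i−2. -/
def MemPc (ε Δ : ℝ) (i : ℕ) (μ : Measure (ℝ × ℝ)) : Prop :=
  MemP ε Δ μ ∧ ∃ a : ℕ → ℝ≥0∞, HasDensitySeq Δ i μ a ∧ Antitone a ∧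
    (∀ k : ℕ, a k = ENNReal.ofReal (Real.exp ε) * a (k + i)) ∧
    a 0 = ENNReal.ofReal (Real.exp ε) * a (i - 1) ∧
    ∃ k : ℕ, k ≤ i - 2 ∧ ∀ j : ℕ, j ≤ k → a j = a 0

/-- Membership in 𝒫_i^{(d)}: members of 𝒫_i^{(c)} whose density sequence takes only
the two values a₀ and a_{i−1} on each period: for some 1 ≤ k ≤ i−2, a_j = a₀ for
0 ≤ j < k and a_j = a_{i−1} for k < j ≤ i−1. -/
def MemPd (ε Δ : ℝ) (i : ℕ) (μ : Measure (ℝ × ℝ)) : Prop :=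
  MemP ε Δ μ ∧ ∃ a : ℕ → ℝ≥0∞, HasDensitySeq Δ i μ a ∧ Antitone a ∧
    (∀ k : ℕ, a k = ENNReal.ofReal (Real.exp ε) * a (k + i)) ∧
    a 0 = ENNReal.ofReal (Real.exp ε) * a (i - 1) ∧
    (∃ k : ℕ, k ≤ i - 2 ∧ ∀ j : ℕ, j ≤ k → a j = a 0) ∧
    ∃ k : ℕ, 1 ≤ k ∧ k ≤ i - 2 ∧ (∀ j : ℕ, j < k → a j = a 0) ∧
      ∀ j : ℕ, k < j → j ≤ i - 1 → a j = a (i - 1)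
lemma polar_aux {E : Type*} [NormedAddCommGroup E] [NormedSpace ℝ E] [MeasurableSpace E]
    [BorelSpace E] [FiniteDimensional ℝ E] [Nontrivial E] (μ : Measure E) [μ.IsAddHaarMeasure]
    (f : E → ℝ≥0∞) (hf : Measurable f) :
    ∫⁻ x, f x ∂μ = ∫⁻ r in Set.Ioi (0:ℝ), ENNReal.ofReal (r ^ (Module.finrank ℝ E - 1)) *
      ∫⁻ ω, f (r • (ω : E)) ∂μ.toSphere := by
  have h1 : ∫⁻ x, f x ∂μ = ∫⁻ x : ({(0)}ᶜ : Set E), f x.1 ∂(μ.comap (↑)) := by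
    rw [lintegral_subtype_comap (by measurability), restrict_compl_singleton]
  have h2 := (μ.measurePreserving_homeomorphUnitSphereProd).lintegral_comp_emb
    (Homeomorph.measurableEmbedding _) (fun p => f (p.2.1 • (p.1 : E)))
  have h3 : ∀ x : ({(0)}ᶜ : Set E), ((homeomorphUnitSphereProd E x).2.1 •
      ((homeomorphUnitSphereProd E x).1 : E)) = x.1 := by
    intro x
    have hx : ‖x.1‖ ≠ 0 := norm_ne_zero_iff.2 x.2
    simp [smul_smul, hx]
  simp only [h3] at h2
  have hm : Measurable (fun p : Metric.sphere (0:E) 1 × Set.Ioi (0:ℝ) => f (p.2.1 • (p.1 : E))) := by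
    apply hf.comp
    fun_prop
  have hm' : Measurable (fun r : ℝ => ∫⁻ ω : Metric.sphere (0:E) 1, f (r • (ω : E)) ∂μ.toSphere) := by
    apply Measurable.lintegral_prod_left' (f := fun p : Metric.sphere (0:E) 1 × ℝ => f (p.2 • (p.1 : E)))
    apply hf.comp
    fun_prop
  rw [h1, h2, lintegral_prod_symm' _ hm, Measure.volumeIoiPow,
    lintegral_withDensity_eq_lintegral_mul _ (by fun_prop)
      (g := fun y : Set.Ioi (0:ℝ) => ∫⁻ ω : Metric.sphere (0:E) 1, f (y.1 • (ω : E)) ∂μ.toSphere)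
      (hm'.comp measurable_subtype_coe)]
  rw [← lintegral_subtype_comap measurableSet_Ioi]
  rfl

lemma polar_l1 : ∃ (Ω : Type) (_ : MeasurableSpace Ω) (σ : Measure Ω) (_ : SFinite σ)
    (p : Ω → ℝ × ℝ), Measurable p ∧ (∀ ω, l1 (p ω) = 1) ∧
    ∀ f : ℝ × ℝ → ℝ≥0∞, Measurable f →
      ∫⁻ x, f x = ∫⁻ r in Set.Ioi (0:ℝ), ENNReal.ofReal r * ∫⁻ ω, f (r • p ω) ∂σ := by
  let e : (ℝ × ℝ) ≃L[ℝ] WithLp 1 (ℝ × ℝ) := (WithLp.prodContinuousLinearEquiv 1 ℝ ℝ ℝ).symm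
  let lam : Measure (WithLp 1 (ℝ × ℝ)) := Measure.map e volume
  have hl : lam.IsAddHaarMeasure := e.isAddHaarMeasure_map volume
  have : FiniteDimensional ℝ (WithLp 1 (ℝ × ℝ)) := e.toLinearEquiv.finiteDimensional
  have : Nontrivial (WithLp 1 (ℝ × ℝ)) := e.symm.toEquiv.nontrivial
  have hem : Measurable e := e.continuous.measurable
  have hem' : Measurable e.symm := e.symm.continuous.measurable
  have hd : Module.finrank ℝ (WithLp 1 (ℝ × ℝ)) = 2 := by
    rw [← e.toLinearEquiv.finrank_eq]; simp
  refine ⟨Metric.sphere (0 : WithLp 1 (ℝ × ℝ)) 1, inferInstance, lam.toSphere, inferInstance,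
    fun ω => e.symm ω, ?_, ?_, ?_⟩
  · exact hem'.comp measurable_subtype_coe
  · intro ω
    have h := ω.2
    rw [mem_sphere_zero_iff_norm, WithLp.prod_norm_eq_of_L1] at h
    exact h
  · intro f hf
    have := polar_aux lam (fun x => f (e.symm x)) (hf.comp hem')
    rw [hd] at this
    simp only [map_smul] at this
    simp only [Nat.add_one_sub_one, pow_one, lam] at this
    rw [lintegral_map (f := fun x => f (e.symm x)) (hf.comp hem') hem] at this
    simpa using this

lemma ennreal_coupling {a a' b b' : ℝ} {C X X' Y Y' : ℝ≥0∞} (ha : 0 ≤ a) (ha' : 0 ≤ a')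
    (hb : 0 ≤ b) (hb' : 0 ≤ b') (hs : a + a' = b + b') (h1 : X ≤ C * Y) (h2 : X' ≤ C * Y')
    (h3 : a < b → X' ≤ C * Y) (h4 : b < a → X ≤ C * Y') :
    ENNReal.ofReal a * X + ENNReal.ofReal a' * X' ≤
      C * (ENNReal.ofReal b * Y + ENNReal.ofReal b' * Y') := by
  rcases lt_trichotomy a b with h | h | h
  · have e1 : a' = b' + (b - a) := by linarith
    have e2 : b = a + (b - a) := by ring
    have e3 : ENNReal.ofReal b = ENNReal.ofReal a + ENNReal.ofReal (b - a) := by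
      rw [← ENNReal.ofReal_add ha (by linarith)]; ring_nf
    rw [e1, ENNReal.ofReal_add hb' (by linarith), e3]
    calc _ = ENNReal.ofReal a * X + ENNReal.ofReal b' * X' + ENNReal.ofReal (b - a) * X' := by ring
      _ ≤ ENNReal.ofReal a * (C * Y) + ENNReal.ofReal b' * (C * Y') +
          ENNReal.ofReal (b - a) * (C * Y) := by
        gcongr; exact h3 h
      _ = _ := by ring
  · have e1 : a' = b' := by linarith
    subst h e1
    calc _ ≤ ENNReal.ofReal a * (C * Y) + ENNReal.ofReal a' * (C * Y') := by gcongr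
      _ = _ := by ring
  · have e1 : b' = a' + (a - b) := by linarith
    have e3 : ENNReal.ofReal a = ENNReal.ofReal b + ENNReal.ofReal (a - b) := by
      rw [← ENNReal.ofReal_add hb (by linarith)]; ring_nf
    rw [e1, ENNReal.ofReal_add ha' (by linarith), e3]
    calc _ = ENNReal.ofReal b * X + ENNReal.ofReal a' * X' + ENNReal.ofReal (a - b) * X := by ring
      _ ≤ ENNReal.ofReal b * (C * Y) + ENNReal.ofReal a' * (C * Y') +
          ENNReal.ofReal (a - b) * (C * Y') := by
        gcongr; exact h4 h
      _ = _ := by ring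

lemma l1_add_le (x y : ℝ × ℝ) : l1 (x + y) ≤ l1 x + l1 y := by
  unfold l1
  have h1 := abs_add_le x.1 y.1
  have h2 := abs_add_le x.2 y.2
  simp only [Prod.fst_add, Prod.snd_add]
  linarith

lemma l1_neg (x : ℝ × ℝ) : l1 (-x) = l1 x := by simp [l1]

lemma l1_nonneg (x : ℝ × ℝ) : 0 ≤ l1 x := by unfold l1; positivity

lemma l1_smul (r : ℝ) (x : ℝ × ℝ) : l1 (r • x) = |r| * l1 x := by
  simp [l1, abs_mul, mul_add]

lemma l1_cont : Continuous l1 := by unfold l1; fun_prop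

def layerS (δ : ℝ) (k : ℕ) : Set (ℝ × ℝ) := {x | l1 x ∈ Set.Ico (k * δ) ((k + 1) * δ)}

lemma layerS_meas (δ : ℝ) (k : ℕ) : MeasurableSet (layerS δ k) :=
  l1_cont.measurable measurableSet_Ico

/-- one-dimensional version -/
lemma layer_ineq_radial (δ : ℝ) (hδ : 0 < δ) (Δ : ℝ) (G : ℝ → ℝ≥0∞) (hG : Measurable G)
    (C : ℝ≥0∞) (hC : ∀ r s : ℝ, |r - s| ≤ Δ → G r ≤ C * G s) (j k : ℕ)
    (hjk : |(j:ℝ) - k| * δ ≤ Δ) :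
    ENNReal.ofReal (2 * k + 1) * (∫⁻ r in Set.Ioo (j * δ) ((j + 1) * δ), ENNReal.ofReal r * G r) ≤
    C * (ENNReal.ofReal (2 * j + 1) *
      ∫⁻ r in Set.Ioo (k * δ) ((k + 1) * δ), ENNReal.ofReal r * G r) := by
  have tr : ∀ n : ℕ, ∫⁻ r in Set.Ioo (n * δ) ((n + 1) * δ), ENNReal.ofReal r * G r =
      ∫⁻ τ in Set.Ioo 0 δ, ENNReal.ofReal (n * δ + τ) * G (n * δ + τ) := by
    intro n
    have := (measurePreserving_add_left volume ((n:ℝ) * δ)).setLIntegral_comp_preimage_emb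
      (MeasurableEquiv.addLeft ((n:ℝ) * δ)).measurableEmbedding (fun r => ENNReal.ofReal r * G r)
      (Set.Ioo (n * δ) ((n + 1) * δ))
    rw [← this]
    congr 2
    ext τ; simp [add_mul]
  have rf : ∀ n : ℕ, ∫⁻ τ in Set.Ioo 0 δ, ENNReal.ofReal (n * δ + τ) * G (n * δ + τ) =
      ∫⁻ τ in Set.Ioo 0 δ, ENNReal.ofReal (n * δ + (δ - τ)) * G (n * δ + (δ - τ)) := by
    intro n
    have := (Measure.measurePreserving_sub_left volume δ).setLIntegral_comp_preimage_emb
      (MeasurableEquiv.subLeft δ).measurableEmbedding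
      (fun τ => ENNReal.ofReal (n * δ + τ) * G (n * δ + τ))
      (Set.Ioo 0 δ)
    rw [← this]
    congr 2
    ext τ; simp [and_comm]
  have m1 : ∀ n : ℕ, Measurable fun τ : ℝ => ENNReal.ofReal (n * δ + τ) * G (n * δ + τ) := by
    intro n
    have : Measurable fun τ : ℝ => G (n * δ + τ) := hG.comp (by fun_prop)
    fun_prop
  have m2 : ∀ n : ℕ, Measurable fun τ : ℝ =>
      ENNReal.ofReal (n * δ + (δ - τ)) * G (n * δ + (δ - τ)) := by
    intro n
    exact (m1 n).comp (measurable_const.sub measurable_id)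
  have key : ∀ n : ℕ, ∀ c : ℝ, 0 ≤ c → 2 * (ENNReal.ofReal c *
      ∫⁻ r in Set.Ioo (n * δ) ((n + 1) * δ), ENNReal.ofReal r * G r) =
      ∫⁻ τ in Set.Ioo 0 δ, (ENNReal.ofReal (c * (n * δ + τ)) * G (n * δ + τ) +
        ENNReal.ofReal (c * (n * δ + (δ - τ))) * G (n * δ + (δ - τ))) := by
    intro n c hc
    simp only [ENNReal.ofReal_mul hc, mul_assoc]
    rw [lintegral_add_left ((m1 n).const_mul _), lintegral_const_mul _ (m1 n),
      lintegral_const_mul _ (m2 n), ← rf n, ← tr n, two_mul]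
  have two : (2:ℝ≥0∞) ≠ 0 := by norm_num
  rw [← ENNReal.mul_le_mul_iff_right two (by norm_num), key j _ (by positivity), ← mul_assoc,
    mul_comm 2 C, mul_assoc, key k _ (by positivity), ← lintegral_const_mul _
    (by simp only [ENNReal.ofReal_mul (show (0:ℝ) ≤ 2 * j + 1 by positivity), mul_assoc]
        exact ((m1 k).const_mul _).add ((m2 k).const_mul _))]
  apply setLIntegral_mono' measurableSet_Ioo
  rintro τ ⟨h0, h1⟩
  have hj : (0:ℝ) ≤ j * δ := by positivity
  have hk : (0:ℝ) ≤ k * δ := by positivity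
  have e : (2 * k + 1) * (j * δ + τ) - (2 * j + 1) * (k * δ + τ) =
    ((k:ℝ) - j) * (2 * τ - δ) := by ring
  apply ennreal_coupling
  · positivity
  · apply mul_nonneg <;> [positivity; linarith]
  · positivity
  · apply mul_nonneg <;> [positivity; linarith]
  · ring
  · apply hC
    rw [show (j * δ + τ - (k * δ + τ)) = ((j:ℝ) - k) * δ by ring, abs_mul, abs_of_pos hδ]
    exact hjk
  · apply hC
    rw [show (j * δ + (δ - τ) - (k * δ + (δ - τ))) = ((j:ℝ) - k) * δ by ring, abs_mul,
      abs_of_pos hδ]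
    exact hjk
  · intro h
    have h : ((k:ℝ) - j) * (2 * τ - δ) < 0 := by linarith
    apply hC
    rcases lt_trichotomy j k with hlt | heq | hgt
    · have h' : (j:ℝ) + 1 ≤ k := by exact_mod_cast hlt
      rw [abs_of_nonpos (by linarith)] at hjk
      have : 2 * τ - δ < 0 := by nlinarith
      rw [abs_le]; constructor <;> nlinarith
    · subst heq; simp at h
    · have h' : (k:ℝ) + 1 ≤ j := by exact_mod_cast hgt
      rw [abs_of_nonneg (by linarith)] at hjk
      have : 0 < 2 * τ - δ := by nlinarith
      rw [abs_le]; constructor <;> nlinarith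
  · intro h
    have h : 0 < ((k:ℝ) - j) * (2 * τ - δ) := by linarith
    apply hC
    rcases lt_trichotomy j k with hlt | heq | hgt
    · have h' : (j:ℝ) + 1 ≤ k := by exact_mod_cast hlt
      rw [abs_of_nonpos (by linarith)] at hjk
      have : 0 < 2 * τ - δ := by nlinarith
      rw [abs_le]; constructor <;> nlinarith
    · subst heq; simp at h
    · have h' : (k:ℝ) + 1 ≤ j := by exact_mod_cast hgt
      rw [abs_of_nonneg (by linarith)] at hjk
      have : 2 * τ - δ < 0 := by nlinarith
      rw [abs_le]; constructor <;> nlinarith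

lemma layer_ineq (δ : ℝ) (hδ : 0 < δ) (Δ : ℝ) (g : ℝ × ℝ → ℝ≥0∞) (hg : Measurable g)
    (C : ℝ≥0∞) (hC : ∀ x t, l1 t ≤ Δ → g x ≤ C * g (x + t)) (j k : ℕ)
    (hjk : |(j:ℝ) - k| * δ ≤ Δ) :
    ENNReal.ofReal (2 * k + 1) * (∫⁻ x in layerS δ j, g x) ≤
    C * (ENNReal.ofReal (2 * j + 1) * ∫⁻ x in layerS δ k, g x) := by
  obtain ⟨Ω, _, σ, _, p, hp, hp1, hpol⟩ := polar_l1
  let G : ℝ → ℝ≥0∞ := fun r => ∫⁻ ω, g (r • p ω) ∂σ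
  have hgm : Measurable (fun q : Ω × ℝ => g (q.2 • p q.1)) := by
    apply hg.comp
    fun_prop
  have hG : Measurable G :=
    Measurable.lintegral_prod_left' (f := fun q : Ω × ℝ => g (q.2 • p q.1)) hgm
  have hGC : ∀ r s : ℝ, |r - s| ≤ Δ → G r ≤ C * G s := by
    intro r s hrs
    have hm : Measurable fun ω => g (s • p ω) := hg.comp (by fun_prop)
    simp only [G]
    rw [← lintegral_const_mul _ hm]
    apply lintegral_mono
    intro ω
    have := hC (r • p ω) ((s - r) • p ω) (by
      rw [l1_smul, hp1, mul_one, abs_sub_comm]; exact hrs)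
    rwa [← add_smul, add_sub_cancel] at this
  have rep : ∀ n : ℕ, ∫⁻ x in layerS δ n, g x =
      ∫⁻ r in Set.Ioo (n * δ) ((n + 1) * δ), ENNReal.ofReal r * G r := by
    intro n
    have hn : (0:ℝ) ≤ n * δ := by positivity
    rw [← lintegral_indicator (layerS_meas δ n), hpol _ (hg.indicator (layerS_meas δ n))]
    rw [setLIntegral_congr (Ioo_ae_eq_Ico (a := (n:ℝ) * δ) (b := (n + 1) * δ))]
    rw [← lintegral_indicator measurableSet_Ico, ← lintegral_indicator measurableSet_Ioi]
    apply lintegral_congr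
    intro r
    by_cases hr : r ∈ Set.Ioi (0:ℝ)
    · rw [Set.indicator_of_mem hr]
      have hmem : ∀ ω, r • p ω ∈ layerS δ n ↔ r ∈ Set.Ico (n * δ) ((n + 1) * δ) := by
        intro ω
        simp only [layerS, Set.mem_ofPred_eq, l1_smul, hp1, mul_one, abs_of_pos (Set.mem_Ioi.1 hr)]
      by_cases h2 : r ∈ Set.Ico (n * δ) ((n + 1) * δ)
      · rw [Set.indicator_of_mem h2]
        congr 1
        apply lintegral_congr
        intro ω
        rw [Set.indicator_of_mem ((hmem ω).2 h2)]
      · rw [Set.indicator_of_notMem h2]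
        have : ∀ ω, (layerS δ n).indicator g (r • p ω) = 0 := fun ω =>
          Set.indicator_of_notMem (fun h => h2 ((hmem ω).1 h)) _
        simp [this]
    · rw [Set.indicator_of_notMem hr]
      have hr' : r ≤ 0 := not_lt.1 hr
      symm
      simp [Set.indicator, ENNReal.ofReal_of_nonpos hr']
  rw [rep, rep]
  exact layer_ineq_radial δ hδ Δ G hG C hGC j k hjk

lemma smoothing (ε Δ : ℝ) (μ : Measure (ℝ × ℝ)) (h : MemP ε Δ μ) (η : ℝ) (hη : 0 < η) :
    ∃ g : ℝ × ℝ → ℝ≥0∞, Measurable g ∧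
      (∀ x t, l1 t ≤ Δ → g x ≤ ENNReal.ofReal (Real.exp ε) * g (x + t)) ∧
      ∫⁻ x, g x = 1 ∧
      ∫⁻ x, ENNReal.ofReal (l1 x) * g x ≤ cost μ + ENNReal.ofReal (2 * η) := by
  obtain ⟨hprob, hdp⟩ := h
  let v : ℝ≥0∞ := volume (Metric.closedBall (0 : ℝ × ℝ) η)
  have hv0 : v ≠ 0 := (Metric.measure_closedBall_pos volume _ hη).ne'
  have hvt : v ≠ ⊤ := measure_closedBall_lt_top.ne
  have hD : MeasurableSet {q : (ℝ × ℝ) × (ℝ × ℝ) | dist q.2 q.1 ≤ η} :=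
    measurableSet_le (by fun_prop) measurable_const
  have hball : ∀ x, MeasurableSet (Metric.closedBall (x : ℝ × ℝ) η) :=
    fun x => measurableSet_closedBall
  have hm : Measurable fun x : ℝ × ℝ => μ (Metric.closedBall x η) :=
    measurable_measure_prodMk_left hD
  have ton : ∀ w : ℝ × ℝ → ℝ≥0∞, Measurable w →
      ∫⁻ x, w x * μ (Metric.closedBall x η) = ∫⁻ y, (∫⁻ x in Metric.closedBall y η, w x) ∂μ := by
    intro w hw
    have h1 : ∀ x, w x * μ (Metric.closedBall x η) =
        ∫⁻ y, ({q : (ℝ × ℝ) × (ℝ × ℝ) | dist q.2 q.1 ≤ η}.indicator (fun q => w q.1) (x, y)) ∂μ := by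
      intro x
      rw [← setLIntegral_const, ← lintegral_indicator (hball x)]
      rfl
    simp only [h1]
    rw [lintegral_lintegral_swap
      (f := fun x y => {q : (ℝ × ℝ) × (ℝ × ℝ) | dist q.2 q.1 ≤ η}.indicator (fun q => w q.1) (x, y))]
    · apply lintegral_congr
      intro y
      rw [← lintegral_indicator (hball y)]
      apply lintegral_congr
      intro x
      simp only [Set.indicator, Set.mem_ofPred_eq, Metric.mem_closedBall, dist_comm]
    · exact ((hw.comp measurable_fst).indicator hD).aemeasurable
  refine ⟨fun x => v⁻¹ * μ (Metric.closedBall x η), hm.const_mul _, ?_, ?_, ?_⟩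
  · intro x t ht
    have := hdp (Metric.closedBall x η) (hball x) t ht
    have him : (· + t) '' Metric.closedBall x η = Metric.closedBall (x + t) η := by
      rw [Set.image_add_right]
      ext y
      simp only [Set.mem_preimage, Metric.mem_closedBall, dist_eq_norm]
      rw [show y + -t - x = y - (x + t) by abel]
    rw [him] at this
    calc _ ≤ v⁻¹ * (ENNReal.ofReal (Real.exp ε) * μ (Metric.closedBall (x + t) η)) :=
          mul_le_mul_right this _
      _ = _ := by ring
  · rw [lintegral_const_mul _ hm]
    have := ton (fun _ => 1) measurable_const
    simp only [one_mul, setLIntegral_const] at this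
    rw [this]
    simp only [Measure.addHaar_closedBall_center]
    rw [lintegral_const, measure_univ, mul_one, ENNReal.inv_mul_cancel hv0 hvt]
  · have hl : Measurable fun x => ENNReal.ofReal (l1 x) := l1_cont.measurable.ennreal_ofReal
    have e1 : ∀ x, ENNReal.ofReal (l1 x) * (v⁻¹ * μ (Metric.closedBall x η)) =
      v⁻¹ * (ENNReal.ofReal (l1 x) * μ (Metric.closedBall x η)) := fun x => by ring
    simp only [e1]
    rw [lintegral_const_mul _ (by exact hl.mul hm), ton _ hl]
    have e2 : ∀ y, ∫⁻ x in Metric.closedBall y η, ENNReal.ofReal (l1 x) ≤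
        (ENNReal.ofReal (l1 y) + ENNReal.ofReal (2 * η)) * v := by
      intro y
      have : v = volume (Metric.closedBall y η) := (Measure.addHaar_closedBall_center _ _ _).symm
      rw [this, ← setLIntegral_const]
      apply setLIntegral_mono' (hball y)
      intro x hx
      rw [← ENNReal.ofReal_add (l1_nonneg _) (by positivity)]
      apply ENNReal.ofReal_le_ofReal
      have h1 := l1_add_le y (x - y)
      rw [add_sub_cancel] at h1
      have h2 : ‖x - y‖ ≤ η := by rwa [← dist_eq_norm]
      have h3 := (norm_fst_le (x - y)).trans h2
      have h4 := (norm_snd_le (x - y)).trans h2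
      rw [Real.norm_eq_abs] at h3 h4
      have : l1 (x - y) ≤ 2 * η := by unfold l1; linarith
      linarith
    calc _ ≤ v⁻¹ * ∫⁻ y, (ENNReal.ofReal (l1 y) + ENNReal.ofReal (2 * η)) * v ∂μ := by
          gcongr with y; exact e2 y
      _ = v⁻¹ * ((cost μ + ENNReal.ofReal (2 * η)) * v) := by
          rw [lintegral_mul_const _ (by fun_prop), lintegral_add_left hl, lintegral_const,
            measure_univ, mul_one, cost]
      _ = cost μ + ENNReal.ofReal (2 * η) := by
          rw [mul_comm _ v, ← mul_assoc, ENNReal.inv_mul_cancel hv0 hvt, one_mul]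
      _ ≤ _ := le_rfl

lemma layerIdx_eq_iff (Δ : ℝ) (hΔ : 0 < Δ) (i : ℕ) (hi : 1 ≤ i) (x : ℝ × ℝ) (k : ℕ) :
    layerIdx Δ i x = k ↔ x ∈ layerS (Δ / i) k := by
  have hi' : (0:ℝ) < i := by exact_mod_cast hi
  have h0 := l1_nonneg x
  unfold layerIdx layerS
  rw [Nat.floor_eq_iff (by positivity), le_div_iff₀ hΔ, div_lt_iff₀ hΔ]
  simp only [Set.mem_ofPred_eq, Set.mem_Ico, mul_div_assoc']
  rw [div_le_iff₀ hi', lt_div_iff₀ hi']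

lemma layerIdx_add (Δ : ℝ) (hΔ : 0 < Δ) (i : ℕ) (x t : ℝ × ℝ) (ht : l1 t ≤ Δ) :
    layerIdx Δ i (x + t) ≤ layerIdx Δ i x + i := by
  unfold layerIdx
  have h0 := l1_nonneg x
  rw [← Nat.floor_add_natCast (by positivity)]
  apply Nat.floor_le_floor
  have h := l1_add_le x t
  rw [div_add' _ _ _ hΔ.ne']
  gcongr
  nlinarith [(Nat.cast_nonneg i : (0:ℝ) ≤ i)]

lemma layering (ε Δ : ℝ) (hΔ : 0 < Δ) (i : ℕ) (hi : 1 ≤ i) (g : ℝ × ℝ → ℝ≥0∞)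
    (hg : Measurable g)
    (hC : ∀ x t, l1 t ≤ Δ → g x ≤ ENNReal.ofReal (Real.exp ε) * g (x + t))
    (h1 : ∫⁻ x, g x = 1) :
    ∃ ν, MemPsym ε Δ i ν ∧
      cost ν ≤ (∫⁻ x, ENNReal.ofReal (l1 x) * g x) + ENNReal.ofReal (Δ / i) := by
  have hi' : (0:ℝ) < i := by exact_mod_cast hi
  set δ := Δ / i with hδdef
  have hδ : 0 < δ := by positivity
  set C := ENNReal.ofReal (Real.exp ε) with hCdef
  let A : ℕ → Set (ℝ × ℝ) := layerS δ
  have hA : ∀ k, MeasurableSet (A k) := layerS_meas δ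
  have hAi : ∀ x k, layerIdx Δ i x = k ↔ x ∈ A k := layerIdx_eq_iff Δ hΔ i hi
  have hdis : Pairwise (Function.onFun Disjoint A) := by
    intro j k hjk
    rw [Function.onFun, Set.disjoint_left]
    intro x hx hx'
    exact hjk (((hAi x j).2 hx).symm.trans ((hAi x k).2 hx'))
  have hun : ⋃ k, A k = Set.univ := by
    ext x
    simp only [Set.mem_iUnion, Set.mem_univ, iff_true]
    exact ⟨_, (hAi x _).1 rfl⟩
  have split : ∀ f : ℝ × ℝ → ℝ≥0∞, ∫⁻ x, f x = ∑' k, ∫⁻ x in A k, f x := by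
    intro f
    rw [← lintegral_iUnion hA hdis, hun, setLIntegral_univ]
  let v : ℕ → ℝ≥0∞ := fun k => volume (A k)
  let m : ℕ → ℝ≥0∞ := fun k => ∫⁻ x in A k, g x
  have hv0 : ∀ k, v k ≠ 0 := by
    intro k
    have ho : IsOpen (l1 ⁻¹' Set.Ioo (k * δ) ((k + 1) * δ)) := isOpen_Ioo.preimage l1_cont
    have hne : (l1 ⁻¹' Set.Ioo (k * δ) ((k + 1) * δ)).Nonempty := by
      refine ⟨((k + 1/2) * δ, 0), ?_⟩
      simp only [Set.mem_preimage, l1, abs_zero, add_zero]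
      rw [abs_of_nonneg (by positivity)]
      constructor <;> nlinarith
    have := ho.measure_pos volume hne
    have hsub : l1 ⁻¹' Set.Ioo (k * δ) ((k + 1) * δ) ⊆ A k := fun x hx => ⟨hx.1.le, hx.2⟩
    exact (this.trans_le (measure_mono hsub)).ne'
  have hvt : ∀ k, v k ≠ ⊤ := by
    intro k
    have hsub : A k ⊆ Metric.closedBall 0 ((k + 1) * δ) := by
      intro x hx
      have hx2 : l1 x < (k + 1) * δ := hx.2
      unfold l1 at hx2
      rw [mem_closedBall_zero_iff, Prod.norm_def, max_le_iff, Real.norm_eq_abs, Real.norm_eq_abs]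
      constructor <;> linarith [abs_nonneg x.1, abs_nonneg x.2]
    exact ((measure_mono hsub).trans_lt measure_closedBall_lt_top).ne
  let a : ℕ → ℝ≥0∞ := fun k => m k / v k
  have hav : ∀ k, a k * v k = m k := fun k => ENNReal.div_mul_cancel (hv0 k) (hvt k)
  have ha : ∀ j k : ℕ, j ≤ k + i → k ≤ j + i → a j ≤ C * a k := by
    intro j k h1 h2
    have hjk : |(j:ℝ) - k| * δ ≤ Δ := by
      have h1' : (j:ℝ) ≤ k + i := by exact_mod_cast h1
      have h2' : (k:ℝ) ≤ j + i := by exact_mod_cast h2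
      have : |(j:ℝ) - k| ≤ i := by rw [abs_le]; constructor <;> linarith
      calc |(j:ℝ) - k| * δ ≤ i * δ := by gcongr
        _ = Δ := by rw [hδdef]; field_simp
    have e1 := layer_ineq δ hδ Δ g hg C hC j k hjk
    have e2 := layer_ineq δ hδ Δ (fun _ => 1) measurable_const 1 (by simp) k j
      (by rwa [abs_sub_comm])
    simp only [setLIntegral_const, one_mul] at e2
    change ENNReal.ofReal (2 * j + 1) * v k ≤ ENNReal.ofReal (2 * k + 1) * v j at e2
    change ENNReal.ofReal (2 * k + 1) * m j ≤ C * (ENNReal.ofReal (2 * j + 1) * m k) at e1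
    have hj0 : ENNReal.ofReal (2 * j + 1) ≠ 0 := by
      rw [ne_eq, ENNReal.ofReal_eq_zero, not_le]; positivity
    have e3 : m j * v k ≤ C * m k * v j := by
      rw [← ENNReal.mul_le_mul_iff_right hj0 ENNReal.ofReal_ne_top]
      calc _ = m j * (ENNReal.ofReal (2 * j + 1) * v k) := by ring
        _ ≤ m j * (ENNReal.ofReal (2 * k + 1) * v j) := by gcongr
        _ = (ENNReal.ofReal (2 * k + 1) * m j) * v j := by ring
        _ ≤ (C * (ENNReal.ofReal (2 * j + 1) * m k)) * v j := by gcongr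
        _ = _ := by ring
    simp only [a]
    rw [ENNReal.div_le_iff (hv0 j) (hvt j), ← mul_div_assoc, div_eq_mul_inv, mul_right_comm, ← div_eq_mul_inv]
    rw [ENNReal.le_div_iff_mul_le (Or.inl (hv0 k)) (Or.inl (hvt k))]
    exact e3
  let b : ℝ × ℝ → ℝ≥0∞ := fun x => a (layerIdx Δ i x)
  have hidx : Measurable (layerIdx Δ i) := by
    unfold layerIdx
    exact Nat.measurable_floor.comp ((l1_cont.measurable.mul_const _).div_const _)
  have hb : Measurable b := (measurable_of_countable a).comp hidx
  have hbA : ∀ k, ∀ x ∈ A k, b x = a k := fun k x hx => by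
    simp only [b]; rw [(hAi x k).2 hx]
  have hbC : ∀ x t, l1 t ≤ Δ → b x ≤ C * b (x + t) := by
    intro x t ht
    apply ha
    · have := layerIdx_add Δ hΔ i (x + t) (-t) (by rwa [l1_neg])
      rwa [add_neg_cancel_right] at this
    · exact layerIdx_add Δ hΔ i x t ht
  refine ⟨volume.withDensity b, ⟨⟨⟨?_⟩, ?_⟩, a, rfl⟩, ?_⟩
  · rw [withDensity_apply _ MeasurableSet.univ, setLIntegral_univ, split, ← h1, split]
    apply tsum_congr
    intro k
    rw [setLIntegral_congr_fun (hA k) (fun x hx => hbA k x hx), setLIntegral_const]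
    exact hav k
  · intro S hS t ht
    have him : MeasurableSet ((· + t) '' S) :=
      (MeasurableEquiv.addRight t).measurableSet_image.2 hS
    rw [withDensity_apply _ hS, withDensity_apply _ him]
    have hbt : Measurable fun x => b (x + t) := hb.comp (measurable_id.add_const t)
    have := (measurePreserving_add_right volume t).setLIntegral_comp_emb
      (MeasurableEquiv.addRight t).measurableEmbedding b S
    rw [← this, ← lintegral_const_mul _ hbt]
    exact lintegral_mono fun x => hbC x t ht
  · have hl : Measurable fun x => ENNReal.ofReal (l1 x) := l1_cont.measurable.ennreal_ofReal
    unfold cost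
    rw [lintegral_withDensity_eq_lintegral_mul _ hb hl]
    have e : (∫⁻ x, ENNReal.ofReal (l1 x) * g x) + ENNReal.ofReal δ =
        ∫⁻ x, (ENNReal.ofReal (l1 x) * g x + ENNReal.ofReal δ * g x) := by
      rw [lintegral_add_left (by exact hl.mul hg), lintegral_const_mul _ hg, h1, mul_one]
    rw [e, split, split]
    apply ENNReal.tsum_le_tsum
    intro k
    calc ∫⁻ x in A k, (b * fun x => ENNReal.ofReal (l1 x)) x
        ≤ ∫⁻ x in A k, a k * ENNReal.ofReal ((k + 1) * δ) := by
          apply setLIntegral_mono' (hA k)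
          intro x hx
          rw [Pi.mul_apply, hbA k x hx]
          gcongr
          exact hx.2.le
      _ = ENNReal.ofReal ((k + 1) * δ) * m k := by
          rw [setLIntegral_const, ← hav k]; ring
      _ = ∫⁻ x in A k, ENNReal.ofReal ((k + 1) * δ) * g x := (lintegral_const_mul _ hg).symm
      _ ≤ _ := by
          apply setLIntegral_mono' (hA k)
          intro x hx
          rw [← add_mul, ← ENNReal.ofReal_add (l1_nonneg _) hδ.le]
          gcongr
          have : k * δ ≤ l1 x := hx.1
          linarith

/-- Lemma 3: the optimal cost V* over all ε-DP probability measures equals the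
infimum over measures with layer-constant densities (over all resolutions i ≥ 1). -/
theorem Vstar_eq_inf_Psym (ε Δ : ℝ) (hε : 0 < ε) (hΔ : 0 < Δ) :
    (⨅ (μ : Measure (ℝ × ℝ)) (_ : MemP ε Δ μ), cost μ) =
    ⨅ (μ : Measure (ℝ × ℝ)) (_ : ∃ i : ℕ, 1 ≤ i ∧ MemPsym ε Δ i μ), cost μ := by
  apply le_antisymm
  · refine le_iInf₂ fun μ hμ => ?_
    obtain ⟨i, _, h, _⟩ := hμ
    exact iInf₂_le μ h
  · refine le_iInf₂ fun μ hμ => ?_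
    apply ENNReal.le_of_forall_pos_le_add
    intro c hc _
    have hc' : (0:ℝ) < c := hc
    obtain ⟨n, hn⟩ := exists_nat_gt (2 * Δ / c)
    have hn0 : (0:ℝ) < n := lt_trans (by positivity) hn
    have hn1 : 1 ≤ n := by exact_mod_cast hn0
    obtain ⟨g, hg, hC, h1, hcost⟩ := smoothing ε Δ μ hμ (c / 4) (by positivity)
    obtain ⟨ν, hν, hνc⟩ := layering ε Δ hΔ n hn1 g hg hC h1
    calc _ ≤ cost ν := iInf₂_le ν ⟨n, hn1, hν⟩
      _ ≤ _ := hνc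
      _ ≤ cost μ + ENNReal.ofReal (2 * (c / 4)) + ENNReal.ofReal (Δ / n) := by gcongr
      _ = cost μ + ENNReal.ofReal (2 * (c / 4) + Δ / n) := by
        rw [add_assoc, ← ENNReal.ofReal_add (by positivity) (by positivity)]
      _ ≤ cost μ + c := by
        gcongr
        apply ENNReal.ofReal_le_of_le_toReal
        rw [ENNReal.coe_toReal]
        have : Δ / n ≤ c / 2 := by
          rw [div_lt_iff₀ hc'] at hn
          rw [div_le_iff₀ hn0]
          linarith
        linarith
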